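/- arXiv:1905.05465 — 2 statements merged into one kernel-verified Lean document; each statement's English description precedes it below -/
import Mathlib

section
/- Let a < 0 < b be real numbers, let V₀ be continuous on [a,b] and smooth on [a,0] and on [0,b], and set Ψ₀ = exp(V₀). Suppose λ₀ > 0 and u₀ : [a,b] → ℝ is a strictly monotone C¹ function with u₀(0) = 0, u₀'(a) = u₀'(b) = 0, satisfying u₀''(x) + V₀'(x)·u₀'(x) = −λ₀·u₀(x) for all x in (a,0) and in (0,b), and suppose λ₀ = λ[Ψ₀,[a,b]] (i.e. λ₀ is the first nonzero Neumann eigenvalue, realized variationally as the Poincaré constant). Then for every smooth function V on [a,b] such that V'(x) ≥ V₀'(x) for all x ∈ [a,0) and V'(x) ≤ V₀'(x) for all x ∈ (0,b], the density Ψ = exp(V) satisfies λ[Ψ,[a,b]] ≥ λ₀. -/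
open MeasureTheory Filter

/-- The function `s_κ` from the paper. -/
noncomputable def sKappa (κ θ : ℝ) : ℝ :=
  if 0 < κ then Real.sin (Real.sqrt κ * θ) / Real.sqrt κ
  else if κ < 0 then Real.sinh (Real.sqrt (-κ) * θ) / Real.sqrt (-κ)
  else θ

/-- The support of the measure `h · 𝓛¹`. -/
noncomputable def measSupport (h : ℝ → ℝ) : Set ℝ :=
  {x : ℝ | ∀ ε > 0,
    0 < (MeasureTheory.volume.withDensity (fun y => ENNReal.ofReal (h y))) (Metric.ball x ε)}

/-- A one-dimensional `MCP(K,N)` density. -/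
def IsMCPDensity (K N : ℝ) (h : ℝ → ℝ) : Prop :=
  (∀ x, 0 ≤ h x) ∧ MeasureTheory.LocallyIntegrable h MeasureTheory.volume ∧
  ∀ x₀ ∈ measSupport h, ∀ x₁ ∈ measSupport h,
    (0 < K → x₀ ≠ x₁ → |x₁ - x₀| < Real.pi / Real.sqrt (K / (N - 1))) ∧
    ∀ t ∈ Set.Icc (0:ℝ) 1,
      (sKappa (K / (N - 1)) ((1 - t) * |x₁ - x₀|) / sKappa (K / (N - 1)) |x₁ - x₀|) ^ (N - 1)
          * h x₀
        ≤ h (t * x₁ + (1 - t) * x₀)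

/-- The model density `h_{K,N,D}`. -/
noncomputable def modelDensity (K N D : ℝ) (x : ℝ) : ℝ :=
  if x ∈ Set.Icc 0 (D / 2) then sKappa (K / (N - 1)) (D - x) ^ (N - 1)
  else if x ∈ Set.Icc (D / 2) D then sKappa (K / (N - 1)) x ^ (N - 1)
  else 0

/-- Locally Lipschitz functions on a subset `I` of the reals. -/
def LocLipschitzOn (f : ℝ → ℝ) (I : Set ℝ) : Prop :=
  ∀ x ∈ I, ∃ ε > 0, ∃ C : NNReal, LipschitzOnWith C f (I ∩ Metric.ball x ε)

/-- The local Lipschitz slope `|∇f|(x)` relative to `I`. -/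
noncomputable def slopeOn (f : ℝ → ℝ) (I : Set ℝ) (x : ℝ) : ℝ :=
  Filter.limsup (fun y => |f y - f x| / |y - x|) (nhdsWithin x (I \ {x}))

/-- The Poincaré constant `λ[h, I]` of the density `h` on `I`. -/
noncomputable def poincareConst (h : ℝ → ℝ) (I : Set ℝ) : ℝ :=
  sInf { r : ℝ | ∃ f : ℝ → ℝ, LocLipschitzOn f I ∧
    (∫ x in I, f x * h x) = 0 ∧
    (0 < ∫ x in I, (f x) ^ 2 * h x) ∧
    MeasureTheory.IntegrableOn (fun x => (f x) ^ 2 * h x) I ∧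
    r = (∫ x in I, (slopeOn f I x) ^ 2 * h x) / (∫ x in I, (f x) ^ 2 * h x) }

theorem integrableOn_deriv_sq_mul_of_lipschitzOnWith {a b : ℝ} {K : NNReal} {f w : ℝ → ℝ}
    (hf : LipschitzOnWith K f (Set.Icc a b)) (hw : ContinuousOn w (Set.Icc a b)) :
    IntegrableOn (fun x => deriv f x ^ 2 * w x) (Set.Icc a b) := by
  refine (hw.integrableOn_Icc (μ := volume)).bdd_mul (c := (K : ℝ) ^ 2)
    ((measurable_deriv f).pow_const 2).aestronglyMeasurable ?_
  rw [← restrict_Ioo_eq_restrict_Icc]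
  refine (ae_restrict_iff' measurableSet_Ioo).2 (ae_of_all _ fun x hx => ?_)
  have := norm_deriv_le_of_lipschitzOn (Icc_mem_nhds hx.1 hx.2) hf
  rw [norm_pow]
  gcongr

/-- Picone's inequality, integrated against a solution `p` of a Riccati inequality. -/
theorem riccati_boundary_le {c d lam : ℝ} (hcd : c ≤ d) {K : NNReal} {g w p p' : ℝ → ℝ}
    (hg : LipschitzOnWith K g (Set.Icc c d)) (hw : ContinuousOn w (Set.Icc c d))
    (hwpos : ∀ x ∈ Set.Icc c d, 0 < w x)
    (hp : ∀ x ∈ Set.Icc c d, HasDerivAt p (p' x) x) (hp' : ContinuousOn p' (Set.Icc c d))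
    (hric : ∀ x ∈ Set.Icc c d, p' x ≤ -(lam * w x) - p x ^ 2 / w x) :
    g d ^ 2 * p d - g c ^ 2 * p c ≤ ∫ x in c..d, (deriv g x ^ 2 * w x - lam * (g x ^ 2 * w x)) := by
  obtain ⟨C, hC⟩ := isCompact_Icc.exists_bound_of_continuousOn hp'
  have hplip : LipschitzOnWith C.toNNReal p (Set.Icc c d) := by
    refine (convex_Icc c d).lipschitzOnWith_of_nnnorm_hasDerivWithin_le
      (fun x hx => (hp x hx).hasDerivWithinAt) fun x hx => ?_
    rw [← NNReal.coe_le_coe]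
    exact (hC x hx).trans (Real.le_coe_toNNReal C)
  have hgac : AbsolutelyContinuousOnInterval g c d :=
    LipschitzOnWith.absolutelyContinuousOnInterval (K := K) (by rwa [Set.uIcc_of_le hcd])
  have hpac : AbsolutelyContinuousOnInterval p c d :=
    LipschitzOnWith.absolutelyContinuousOnInterval (K := C.toNNReal) (by rwa [Set.uIcc_of_le hcd])
  have hF := (hgac.fun_mul hgac).fun_mul hpac
  have hgc := hg.continuousOn
  have hint : IntervalIntegrable (fun x => deriv g x ^ 2 * w x - lam * (g x ^ 2 * w x))
      volume c d := by
    rw [intervalIntegrable_iff_integrableOn_Icc_of_le hcd]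
    exact (integrableOn_deriv_sq_mul_of_lipschitzOnWith hg hw).sub
      (ContinuousOn.integrableOn_Icc (by fun_prop))
  have key := hF.integral_deriv_eq_sub
  have : g d ^ 2 * p d - g c ^ 2 * p c = g d * g d * p d - g c * g c * p c := by ring
  rw [this, ← key]
  refine intervalIntegral.integral_mono_ae_restrict hcd hF.intervalIntegrable_deriv hint ?_
  rw [EventuallyLE, ae_restrict_iff' measurableSet_Icc]
  filter_upwards [hgac.ae_differentiableAt] with x hx hxcd
  have hgx := (hx (by rwa [Set.uIcc_of_le hcd])).hasDerivAt
  rw [((hgx.fun_mul hgx).fun_mul (hp x hxcd)).deriv]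
  have hwx := hwpos x hxcd
  have h1 : g x ^ 2 * p' x ≤ g x ^ 2 * (-(lam * w x) - p x ^ 2 / w x) :=
    mul_le_mul_of_nonneg_left (hric x hxcd) (sq_nonneg _)
  have h2 : 0 ≤ (deriv g x * w x - g x * p x) ^ 2 / w x := by positivity
  have h3 : (deriv g x * w x - g x * p x) ^ 2 / w x
      = deriv g x ^ 2 * w x - 2 * g x * deriv g x * p x + g x ^ 2 * (p x ^ 2 / w x) := by
    field_simp
    ring
  linarith

/-- A weighted Hardy-type inequality for functions vanishing at the left endpoint. -/
theorem hardy_of_riccati {b lam M : ℝ} (hb : 0 < b) {K : NNReal} {g w p p' : ℝ → ℝ}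
    (hg : LipschitzOnWith K g (Set.Icc 0 b)) (hg0 : g 0 = 0) (hw : ContinuousOn w (Set.Icc 0 b))
    (hwpos : ∀ x ∈ Set.Icc 0 b, 0 < w x)
    (hp : ∀ x ∈ Set.Ioo 0 b, HasDerivAt p (p' x) x) (hp' : ContinuousOn p' (Set.Ioo 0 b))
    (hric : ∀ x ∈ Set.Ioo 0 b, p' x ≤ -(lam * w x) - p x ^ 2 / w x)
    (hpnn : ∀ x ∈ Set.Ioo 0 b, 0 ≤ p x) (hpM : ∀ x ∈ Set.Ioo 0 b, p x ≤ M / x) :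
    0 ≤ ∫ x in (0 : ℝ)..b, (deriv g x ^ 2 * w x - lam * (g x ^ 2 * w x)) := by
  have hgc := hg.continuousOn
  set q : ℝ → ℝ := fun x => deriv g x ^ 2 * w x - lam * (g x ^ 2 * w x) with hq
  have hint : IntegrableOn q (Set.Icc 0 b) :=
    (integrableOn_deriv_sq_mul_of_lipschitzOnWith hg hw).sub
      (ContinuousOn.integrableOn_Icc (by fun_prop))
  have hsub : ∀ x y, x ∈ Set.Icc 0 b → y ∈ Set.Icc 0 b → IntervalIntegrable q volume x y :=
    fun x y hx hy => (hint.mono_set (Set.uIcc_subset_Icc hx hy)).intervalIntegrable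
  have hH : ContinuousOn (fun x => ∫ t in (0 : ℝ)..x, q t) (Set.Icc 0 b) := by
    have := intervalIntegral.continuousOn_primitive_interval (a := (0 : ℝ)) (b := b)
      (μ := volume) (f := q) (by rwa [Set.uIcc_of_le hb.le])
    rwa [Set.uIcc_of_le hb.le] at this
  set H : ℝ → ℝ := fun x => ∫ t in (0 : ℝ)..x, q t with hHdef
  have hH0 : H 0 = 0 := by simp [hHdef]
  set s : Set ℝ := Set.Ioo 0 (b / 2)
  have hne : (nhdsWithin (0 : ℝ) s).NeBot := left_nhdsWithin_Ioo_neBot (by linarith)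
  have hsb : ∀ c ∈ s, c ∈ Set.Icc 0 b ∧ b - c ∈ Set.Icc 0 b := fun c hc =>
    ⟨⟨hc.1.le, by linarith [hc.2]⟩, ⟨by linarith [hc.2], by linarith [hc.1]⟩⟩
  have h1 : Tendsto H (nhdsWithin 0 s) (nhds (H 0)) :=
    (hH 0 ⟨le_rfl, hb.le⟩).mono_left (nhdsWithin_mono _ fun c hc => (hsb c hc).1)
  have h2 : Tendsto (fun c => H (b - c)) (nhdsWithin 0 s) (nhds (H b)) := by
    refine Tendsto.comp (hH b ⟨hb.le, le_rfl⟩) (tendsto_nhdsWithin_iff.2 ⟨?_, ?_⟩)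
    · exact (Continuous.tendsto' (by fun_prop) 0 b (by simp)).mono_left nhdsWithin_le_nhds
    · filter_upwards [self_mem_nhdsWithin] with c hc using (hsb c hc).2
  have h3 : Tendsto (fun c : ℝ => (K : ℝ) ^ 2 * M * c) (nhdsWithin 0 s) (nhds 0) :=
    (Continuous.tendsto' (by fun_prop) 0 0 (by simp)).mono_left nhdsWithin_le_nhds
  have h4 := (h2.sub h1).add h3
  rw [hH0, sub_zero, add_zero] at h4
  refine ge_of_tendsto h4 ?_
  filter_upwards [self_mem_nhdsWithin] with c hc
  have hc0 : 0 < c := hc.1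
  have hcb : c < b / 2 := hc.2
  have hss : Set.Icc c (b - c) ⊆ Set.Ioo 0 b := fun x hx =>
    ⟨by linarith [hx.1], by linarith [hx.2]⟩
  have hss' : Set.Icc c (b - c) ⊆ Set.Icc 0 b := hss.trans Set.Ioo_subset_Icc_self
  have key := riccati_boundary_le (lam := lam) (by linarith : c ≤ b - c) (hg.mono hss')
    (hw.mono hss') (fun x hx => hwpos x (hss' hx)) (fun x hx => hp x (hss hx)) (hp'.mono hss)
    (fun x hx => hric x (hss hx))
  have hHd : ∫ x in c..(b - c), q x = H (b - c) - H c := by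
    rw [hHdef]
    exact (intervalIntegral.integral_interval_sub_left
      (hsub _ _ ⟨le_rfl, hb.le⟩ (hsb c hc).2) (hsub _ _ ⟨le_rfl, hb.le⟩ (hsb c hc).1)).symm
  have hend : 0 ≤ g (b - c) ^ 2 * p (b - c) :=
    mul_nonneg (sq_nonneg _) (hpnn _ (hss ⟨by linarith, le_rfl⟩))
  have hcmem : c ∈ Set.Ioo 0 b := hss ⟨le_rfl, by linarith⟩
  have hgK : |g c| ≤ K * c := by
    have := hg.dist_le_mul c (hsb c hc).1 0 ⟨le_rfl, hb.le⟩
    rwa [Real.dist_eq, Real.dist_eq, hg0, sub_zero, sub_zero, abs_of_pos hc0] at this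
  have hstart : g c ^ 2 * p c ≤ (K : ℝ) ^ 2 * M * c := by
    calc g c ^ 2 * p c ≤ (K * c) ^ 2 * p c := by
          refine mul_le_mul_of_nonneg_right ?_ (hpnn c hcmem)
          rw [← sq_abs]
          gcongr
      _ ≤ (K * c) ^ 2 * (M / c) := mul_le_mul_of_nonneg_left (hpM c hcmem) (by positivity)
      _ = (K : ℝ) ^ 2 * M * c := by field_simp
  linarith [hHd ▸ key]

/-- The Dirichlet–Neumann eigenvalue bound obtained from a positive monotone supersolution. -/
theorem hardy_of_supersolution {b lam : ℝ} (hb : 0 < b) (hlam : 0 ≤ lam) {K : NNReal}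
    {g V V' u u' u'' : ℝ → ℝ}
    (hg : LipschitzOnWith K g (Set.Icc 0 b)) (hg0 : g 0 = 0) (hV : ContinuousOn V (Set.Icc 0 b))
    (hV' : ∀ x ∈ Set.Ioo 0 b, HasDerivAt V (V' x) x) (hV'c : ContinuousOn V' (Set.Ioo 0 b))
    (hu : ∀ x ∈ Set.Ioo 0 b, HasDerivAt u (u' x) x)
    (hu' : ∀ x ∈ Set.Ioo 0 b, HasDerivAt u' (u'' x) x) (hu''c : ContinuousOn u'' (Set.Ioo 0 b))
    (hupos : ∀ x ∈ Set.Ioo 0 b, 0 < u x) (hu'nn : ∀ x ∈ Set.Ioo 0 b, 0 ≤ u' x)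
    (hsuper : ∀ x ∈ Set.Ioo 0 b, u'' x + V' x * u' x ≤ -(lam * u x)) :
    0 ≤ ∫ x in (0 : ℝ)..b,
      (deriv g x ^ 2 * Real.exp (V x) - lam * (g x ^ 2 * Real.exp (V x))) := by
  have huc : ContinuousOn u (Set.Ioo 0 b) := fun x hx => (hu x hx).continuousAt.continuousWithinAt
  have hu'c : ContinuousOn u' (Set.Ioo 0 b) :=
    fun x hx => (hu' x hx).continuousAt.continuousWithinAt
  have hVc := hV.mono (Set.Ioo_subset_Icc_self (a := (0 : ℝ)) (b := b))
  have hflux : ∀ x ∈ Set.Ioo 0 b, HasDerivAt (fun y => u' y * Real.exp (V y))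
      (u'' x * Real.exp (V x) + u' x * (Real.exp (V x) * V' x)) x :=
    fun x hx => (hu' x hx).fun_mul (hV' x hx).exp
  have hanti : AntitoneOn (fun y => u' y * Real.exp (V y)) (Set.Ioo 0 b) := by
    refine antitoneOn_of_hasDerivWithinAt_nonpos (convex_Ioo 0 b)
      (fun x hx => (hflux x hx).continuousAt.continuousWithinAt)
      (fun x hx => (hflux x (interior_subset hx)).hasDerivWithinAt) fun x hx => ?_
    have hx := interior_subset hx
    have : u'' x + V' x * u' x ≤ 0 :=
      (hsuper x hx).trans (neg_nonpos.2 (mul_nonneg hlam (hupos x hx).le))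
    nlinarith [Real.exp_pos (V x)]
  obtain ⟨E, hE⟩ := isCompact_Icc.exists_bound_of_continuousOn hV.rexp
  refine hardy_of_riccati (M := 2 * E) hb hg hg0 hV.rexp (fun x _ => Real.exp_pos _)
    (p := fun x => u' x * Real.exp (V x) / u x)
    (fun x hx => (hflux x hx).fun_div (hu x hx) (hupos x hx).ne') ?_ ?_ ?_ ?_
  · refine ContinuousOn.div (by fun_prop) (by fun_prop) fun x hx => ?_
    exact pow_ne_zero 2 (hupos x hx).ne'
  · intro x hx
    have hux := hupos x hx
    have hs := hsuper x hx
    have he := Real.exp_pos (V x)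
    have h1 : ((u'' x * Real.exp (V x) + u' x * (Real.exp (V x) * V' x)) * u x
        - u' x * Real.exp (V x) * u' x) / u x ^ 2
        = (u'' x + V' x * u' x) * (Real.exp (V x) / u x)
          - (u' x * Real.exp (V x) / u x) ^ 2 / Real.exp (V x) := by
      field_simp
    have h2 : (u'' x + V' x * u' x) * (Real.exp (V x) / u x)
        ≤ -(lam * u x) * (Real.exp (V x) / u x) :=
      mul_le_mul_of_nonneg_right hs (by positivity)
    have h3 : -(lam * u x) * (Real.exp (V x) / u x) = -(lam * Real.exp (V x)) := by
      field_simp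
    linarith
  · intro x hx
    have := hupos x hx
    have := hu'nn x hx
    positivity
  · intro x hx
    have hx0 : 0 < x := hx.1
    have hsub : Set.Icc (x / 2) x ⊆ Set.Ioo 0 b := fun y hy =>
      ⟨by linarith [hy.1], by linarith [hy.2, hx.2]⟩
    obtain ⟨y, hy, hyu⟩ := exists_hasDerivAt_eq_slope u u' (by linarith : x / 2 < x)
      (huc.mono hsub) (fun z hz => hu z (hsub (Set.Ioo_subset_Icc_self hz)))
    have hyb := hsub (Set.Ioo_subset_Icc_self hy)
    have h1 : u' x * Real.exp (V x) ≤ u' y * Real.exp (V y) := hanti hyb hx hy.2.le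
    have h2 : Real.exp (V y) ≤ E := (le_abs_self _).trans (hE y (Set.Ioo_subset_Icc_self hyb))
    have h3 : u' y * Real.exp (V y) ≤ u' y * E :=
      mul_le_mul_of_nonneg_left h2 (hu'nn y hyb)
    have h4 : 0 < u (x / 2) := hupos _ (hsub ⟨le_rfl, by linarith⟩)
    have hE0 : 0 < E := (Real.exp_pos _).trans_le h2
    have h5 : u' y * x ≤ 2 * u x := by
      rw [hyu, div_mul_eq_mul_div, div_le_iff₀ (by linarith)]
      nlinarith
    rw [div_le_div_iff₀ (hupos x hx) hx0]
    nlinarith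

/-- The two-sided version of `hardy_of_supersolution`, for functions vanishing at `0`. -/
theorem hardy_two_sided_of_supersolution {a b lam : ℝ} (ha : a < 0) (hb : 0 < b) (hlam : 0 ≤ lam)
    {K : NNReal} {g V V' u u' u'' : ℝ → ℝ}
    (hg : LipschitzOnWith K g (Set.Icc a b)) (hg0 : g 0 = 0) (hV : ContinuousOn V (Set.Icc a b))
    (hV' : ∀ x ∈ Set.Ioo a b, HasDerivAt V (V' x) x) (hV'c : ContinuousOn V' (Set.Ioo a b))
    (hu : ∀ x ∈ Set.Ioo a b, HasDerivAt u (u' x) x)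
    (hu' : ∀ x ∈ Set.Ioo a 0 ∪ Set.Ioo 0 b, HasDerivAt u' (u'' x) x)
    (hu''c₁ : ContinuousOn u'' (Set.Ioo a 0)) (hu''c₂ : ContinuousOn u'' (Set.Ioo 0 b))
    (hneg : ∀ x ∈ Set.Ioo a 0, u x < 0) (hpos : ∀ x ∈ Set.Ioo 0 b, 0 < u x)
    (hu'nn : ∀ x ∈ Set.Ioo a b, 0 ≤ u' x)
    (hsub : ∀ x ∈ Set.Ioo a 0, -(lam * u x) ≤ u'' x + V' x * u' x)
    (hsuper : ∀ x ∈ Set.Ioo 0 b, u'' x + V' x * u' x ≤ -(lam * u x)) :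
    0 ≤ ∫ x in a..b, (deriv g x ^ 2 * Real.exp (V x) - lam * (g x ^ 2 * Real.exp (V x))) := by
  have hgc := hg.continuousOn
  have hint : IntegrableOn
      (fun x => deriv g x ^ 2 * Real.exp (V x) - lam * (g x ^ 2 * Real.exp (V x)))
      (Set.Icc a b) :=
    (integrableOn_deriv_sq_mul_of_lipschitzOnWith hg hV.rexp).sub
      (ContinuousOn.integrableOn_Icc (by fun_prop))
  have hii : ∀ x y, x ∈ Set.Icc a b → y ∈ Set.Icc a b → IntervalIntegrable
      (fun x => deriv g x ^ 2 * Real.exp (V x) - lam * (g x ^ 2 * Real.exp (V x))) volume x y :=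
    fun x y hx hy => (hint.mono_set (Set.uIcc_subset_Icc hx hy)).intervalIntegrable
  have h0 : (0 : ℝ) ∈ Set.Icc a b := ⟨ha.le, hb.le⟩
  rw [← intervalIntegral.integral_add_adjacent_intervals (b := 0)
    (hii _ _ ⟨le_rfl, (ha.trans hb).le⟩ h0) (hii _ _ h0 ⟨(ha.trans hb).le, le_rfl⟩)]
  refine add_nonneg ?_ ?_
  · have hIcc : Set.MapsTo (fun x : ℝ => -x) (Set.Icc 0 (-a)) (Set.Icc a b) := fun x hx =>
      ⟨by linarith [hx.2], by linarith [hx.1]⟩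
    have hIoo₁ : Set.MapsTo (fun x : ℝ => -x) (Set.Ioo 0 (-a)) (Set.Ioo a 0) := fun x hx =>
      ⟨by linarith [hx.2], by linarith [hx.1]⟩
    have hIoo : Set.MapsTo (fun x : ℝ => -x) (Set.Ioo 0 (-a)) (Set.Ioo a b) := fun x hx =>
      ⟨(hIoo₁ hx).1, (hIoo₁ hx).2.trans hb⟩
    have hneglip : LipschitzOnWith 1 (fun x : ℝ => -x) (Set.Icc 0 (-a)) :=
      (LipschitzWith.id.neg).lipschitzOnWith
    have hnegc : ∀ s : Set ℝ, ContinuousOn (fun x : ℝ => -x) s := fun s => continuous_neg.continuousOn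
    have hd : ∀ {f : ℝ → ℝ} {f' x : ℝ}, HasDerivAt f f' (-x) →
        HasDerivAt (fun y => f (-y)) (-f') x := fun {f f' x} hf => by
      simpa [Function.comp_def] using hf.comp x (hasDerivAt_neg x)
    have key := hardy_of_supersolution (b := -a) (lam := lam) (g := fun x => g (-x))
      (V := fun x => V (-x)) (V' := fun x => -V' (-x)) (u := fun x => -u (-x))
      (u' := fun x => u' (-x)) (u'' := fun x => -u'' (-x)) (neg_pos.2 ha) hlam
      (hg.comp hneglip hIcc) (by simpa using hg0) (hV.comp (hnegc _) hIcc)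
      (fun x hx => hd (hV' _ (hIoo hx))) (hV'c.comp (hnegc _) hIoo).neg
      (fun x hx => by simpa using (hd (hu _ (hIoo hx))).fun_neg)
      (fun x hx => hd (hu' _ (Or.inl (hIoo₁ hx))))
      (hu''c₁.comp (hnegc _) hIoo₁).neg (fun x hx => neg_pos.2 (hneg _ (hIoo₁ hx)))
      (fun x hx => hu'nn _ (hIoo hx)) (fun x hx => by linarith [hsub _ (hIoo₁ hx)])
    have hcongr := intervalIntegral.integral_comp_neg (a := (0 : ℝ)) (b := -a)
      (fun x => deriv g x ^ 2 * Real.exp (V x) - lam * (g x ^ 2 * Real.exp (V x)))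
    rw [neg_neg, neg_zero] at hcongr
    rw [← hcongr]
    simpa only [deriv_comp_neg, neg_sq] using key
  · have hIoo : Set.Ioo 0 b ⊆ Set.Ioo a b := Set.Ioo_subset_Ioo_left ha.le
    have hIcc : Set.Icc 0 b ⊆ Set.Icc a b := Set.Icc_subset_Icc_left ha.le
    exact hardy_of_supersolution hb hlam (hg.mono hIcc) hg0 (hV.mono hIcc)
      (fun x hx => hV' x (hIoo hx)) (hV'c.mono hIoo) (fun x hx => hu x (hIoo hx))
      (fun x hx => hu' x (Or.inr hx)) hu''c₂ hpos (fun x hx => hu'nn x (hIoo hx)) hsuper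

theorem LocLipschitzOn.exists_lipschitzOnWith {f : ℝ → ℝ} {I : Set ℝ} (hI : IsCompact I)
    (hf : LocLipschitzOn f I) : ∃ K, LipschitzOnWith K f I := by
  refine LocallyLipschitzOn.exists_lipschitzOnWith_of_compact hI fun x hx => ?_
  obtain ⟨ε, hε, C, hC⟩ := hf x hx
  exact ⟨C, I ∩ Metric.ball x ε,
    inter_mem self_mem_nhdsWithin (mem_nhdsWithin_of_mem_nhds (Metric.ball_mem_nhds x hε)), hC⟩

theorem slopeOn_eq_abs_deriv {f : ℝ → ℝ} {I : Set ℝ} {x : ℝ} (hI : I ∈ nhds x)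
    (hf : DifferentiableAt ℝ f x) : slopeOn f I x = |deriv f x| := by
  have hfil : nhdsWithin x (I \ {x}) = nhdsWithin x {x}ᶜ := by
    rw [Set.sdiff_eq]
    exact nhdsWithin_inter_of_mem (mem_nhdsWithin_of_mem_nhds hI)
  rw [slopeOn, hfil]
  refine Tendsto.limsup_eq ((hasDerivAt_iff_tendsto_slope.1 hf.hasDerivAt).abs.congr fun y => ?_)
  rw [slope_def_field, abs_div]

theorem setIntegral_slopeOn_sq_mul {a b : ℝ} {K : NNReal} {f : ℝ → ℝ} (w : ℝ → ℝ)
    (hf : LipschitzOnWith K f (Set.Icc a b)) :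
    ∫ x in Set.Icc a b, slopeOn f (Set.Icc a b) x ^ 2 * w x
      = ∫ x in Set.Icc a b, deriv f x ^ 2 * w x := by
  rw [integral_Icc_eq_integral_Ioo, integral_Icc_eq_integral_Ioo]
  refine setIntegral_congr_ae measurableSet_Ioo ?_
  filter_upwards [hf.ae_differentiableWithinAt_of_mem_real] with x hx hxI
  have hmem := Icc_mem_nhds hxI.1 hxI.2
  rw [slopeOn_eq_abs_deriv hmem ((hx (Set.Ioo_subset_Icc_self hxI)).differentiableAt hmem), sq_abs]

/-- The set of Rayleigh quotients of a continuous positive density on `[a, b]` is nonempty. -/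
theorem exists_admissible_of_continuousOn {a b : ℝ} (hab : a < b) {w : ℝ → ℝ}
    (hw : ContinuousOn w (Set.Icc a b)) (hwpos : ∀ x ∈ Set.Icc a b, 0 < w x) :
    ∃ f : ℝ → ℝ, LocLipschitzOn f (Set.Icc a b) ∧
      (∫ x in Set.Icc a b, f x * w x) = 0 ∧
      (0 < ∫ x in Set.Icc a b, f x ^ 2 * w x) ∧
      IntegrableOn (fun x => f x ^ 2 * w x) (Set.Icc a b) := by
  have hIcc : ∀ f : ℝ → ℝ, ∫ x in Set.Icc a b, f x = ∫ x in a..b, f x := fun f => by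
    rw [integral_Icc_eq_integral_Ioc, intervalIntegral.integral_of_le hab.le]
  have hm : 0 < ∫ x in Set.Icc a b, w x := by
    rw [hIcc]
    exact intervalIntegral.integral_pos hab hw (fun x hx => (hwpos x (Set.Ioc_subset_Icc_self hx)).le)
      ⟨a, ⟨le_rfl, hab.le⟩, hwpos a ⟨le_rfl, hab.le⟩⟩
  set m := (∫ x in Set.Icc a b, x * w x) / ∫ x in Set.Icc a b, w x with hmdef
  have hcont : ContinuousOn (fun x => (x - m) ^ 2 * w x) (Set.Icc a b) := by fun_prop
  refine ⟨fun x => x - m, fun x _ => ⟨1, one_pos, 1, ?_⟩, ?_, ?_, hcont.integrableOn_Icc⟩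
  · exact LipschitzWith.lipschitzOnWith (LipschitzWith.of_dist_le_mul fun y z => by simp)
  · simp_rw [sub_mul]
    rw [integral_sub (ContinuousOn.integrableOn_Icc (by fun_prop))
      (ContinuousOn.integrableOn_Icc (by fun_prop)), integral_const_mul, hmdef,
      div_mul_cancel₀ _ hm.ne', sub_self]
  · rw [hIcc]
    refine intervalIntegral.integral_pos hab hcont
      (fun x hx => mul_nonneg (sq_nonneg _) (hwpos x (Set.Ioc_subset_Icc_self hx)).le) ?_
    by_cases h : a = m
    · exact ⟨b, ⟨hab.le, le_rfl⟩, mul_pos (pow_pos (by linarith) 2) (hwpos b ⟨hab.le, le_rfl⟩)⟩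
    · exact ⟨a, ⟨le_rfl, hab.le⟩,
        mul_pos (by have := sub_ne_zero.2 h; positivity) (hwpos a ⟨le_rfl, hab.le⟩)⟩

/-- A Hardy inequality for functions vanishing at a point gives a Poincaré inequality. -/
theorem le_poincareConst_of_hardy {a b c lam : ℝ} (hab : a < b) (hlam : 0 ≤ lam) {w : ℝ → ℝ}
    (hw : ContinuousOn w (Set.Icc a b)) (hwpos : ∀ x ∈ Set.Icc a b, 0 < w x)
    (hardy : ∀ (K : NNReal) (g : ℝ → ℝ), LipschitzOnWith K g (Set.Icc a b) → g c = 0 →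
      0 ≤ ∫ x in a..b, (deriv g x ^ 2 * w x - lam * (g x ^ 2 * w x))) :
    lam ≤ poincareConst w (Set.Icc a b) := by
  obtain ⟨f₀, h1, h2, h3, h4⟩ := exists_admissible_of_continuousOn hab hw hwpos
  refine le_csInf ⟨_, f₀, h1, h2, h3, h4, rfl⟩ ?_
  rintro r ⟨f, hf, hmean, hsq, -, rfl⟩
  obtain ⟨K, hK⟩ := hf.exists_lipschitzOnWith isCompact_Icc
  have hfc := hK.continuousOn
  rw [le_div_iff₀ hsq, setIntegral_slopeOn_sq_mul w hK]
  have key := hardy K (fun x => f x - f c)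
    (fun x hx y hy => by simpa [edist_sub_right] using hK hx hy) (sub_self _)
  rw [intervalIntegral.integral_of_le hab.le, ← integral_Icc_eq_integral_Ioc] at key
  simp only [deriv_sub_const_fun] at key
  rw [integral_sub (integrableOn_deriv_sq_mul_of_lipschitzOnWith hK hw)
    (ContinuousOn.integrableOn_Icc (by fun_prop)), integral_const_mul] at key
  have hexp : ∫ x in Set.Icc a b, (f x - f c) ^ 2 * w x
      = (∫ x in Set.Icc a b, f x ^ 2 * w x) + f c ^ 2 * ∫ x in Set.Icc a b, w x := by
    have : ∀ x, (f x - f c) ^ 2 * w x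
        = f x ^ 2 * w x - 2 * f c * (f x * w x) + f c ^ 2 * w x := fun x => by ring
    simp_rw [this]
    rw [integral_add (ContinuousOn.integrableOn_Icc (by fun_prop))
      (ContinuousOn.integrableOn_Icc (by fun_prop)),
      integral_sub (ContinuousOn.integrableOn_Icc (by fun_prop))
      (ContinuousOn.integrableOn_Icc (by fun_prop)), integral_const_mul, integral_const_mul, hmean]
    ring
  have hmass : 0 ≤ ∫ x in Set.Icc a b, w x :=
    setIntegral_nonneg measurableSet_Icc fun x hx => (hwpos x hx).le
  have : 0 ≤ lam * (f c ^ 2 * ∫ x in Set.Icc a b, w x) := by positivity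
  rw [hexp, mul_add] at key
  linarith

theorem ContDiffOn.continuousOn_Ioo_of_hasDerivAt {V V' : ℝ → ℝ} {s : Set ℝ} {a b : ℝ}
    (hV : ContDiffOn ℝ (⊤ : ℕ∞) V s) (hs : Set.Ioo a b ⊆ s)
    (hV' : ∀ x ∈ Set.Ioo a b, HasDerivAt V (V' x) x) : ContinuousOn V' (Set.Ioo a b) :=
  ((hV.mono hs).continuousOn_deriv_of_isOpen isOpen_Ioo (by simp)).congr
    fun x hx => (hV' x hx).deriv.symm

/-- ODE comparison principle (Lemma 3.1). -/
theorem stmt_0 (a b : ℝ) (ha : a < 0) (hb : 0 < b)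
    (V₀ V₀' : ℝ → ℝ)
    (hV₀cont : ContinuousOn V₀ (Set.Icc a b))
    (hV₀sm₁ : ContDiffOn ℝ (⊤ : ℕ∞) V₀ (Set.Icc a 0))
    (hV₀sm₂ : ContDiffOn ℝ (⊤ : ℕ∞) V₀ (Set.Icc 0 b))
    (hV₀'₁ : ∀ x ∈ Set.Ico a 0, HasDerivWithinAt V₀ (V₀' x) (Set.Icc a 0) x)
    (hV₀'₂ : ∀ x ∈ Set.Ioc 0 b, HasDerivWithinAt V₀ (V₀' x) (Set.Icc 0 b) x)
    (lam₀ : ℝ) (hlam₀ : 0 < lam₀)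
    (u₀ u₀' u₀'' : ℝ → ℝ)
    (hu₀C1 : ∀ x ∈ Set.Icc a b, HasDerivWithinAt u₀ (u₀' x) (Set.Icc a b) x)
    (hu₀'cont : ContinuousOn u₀' (Set.Icc a b))
    (hu₀mono : StrictMonoOn u₀ (Set.Icc a b) ∨ StrictAntiOn u₀ (Set.Icc a b))
    (hu₀zero : u₀ 0 = 0)
    (hu₀'a : u₀' a = 0) (hu₀'b : u₀' b = 0)
    (hODE : ∀ x ∈ Set.Ioo a 0 ∪ Set.Ioo 0 b,
      HasDerivAt u₀' (u₀'' x) x ∧ u₀'' x + V₀' x * u₀' x = -(lam₀ * u₀ x))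
    (hlam₀eq : lam₀ = poincareConst (fun x => Real.exp (V₀ x)) (Set.Icc a b))
    (V V' : ℝ → ℝ)
    (hVsm : ContDiffOn ℝ (⊤ : ℕ∞) V (Set.Icc a b))
    (hV' : ∀ x ∈ Set.Icc a b, HasDerivWithinAt V (V' x) (Set.Icc a b) x)
    (hge : ∀ x ∈ Set.Ico a 0, V₀' x ≤ V' x)
    (hle : ∀ x ∈ Set.Ioc 0 b, V' x ≤ V₀' x) :
    lam₀ ≤ poincareConst (fun x => Real.exp (V x)) (Set.Icc a b) := by
  obtain ⟨u, u', u'', hmono, hu0, hu, hode⟩ : ∃ u u' u'' : ℝ → ℝ, StrictMonoOn u (Set.Icc a b) ∧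
      u 0 = 0 ∧ (∀ x ∈ Set.Icc a b, HasDerivWithinAt u (u' x) (Set.Icc a b) x) ∧
      ∀ x ∈ Set.Ioo a 0 ∪ Set.Ioo 0 b,
        HasDerivAt u' (u'' x) x ∧ u'' x + V₀' x * u' x = -(lam₀ * u x) := by
    rcases hu₀mono with h | h
    · exact ⟨u₀, u₀', u₀'', h, hu₀zero, hu₀C1, hODE⟩
    · refine ⟨fun x => -u₀ x, fun x => -u₀' x, fun x => -u₀'' x,
        fun x hx y hy hxy => neg_lt_neg (h hx hy hxy), by simp [hu₀zero],
        fun x hx => (hu₀C1 x hx).fun_neg, fun x hx => ⟨(hODE x hx).1.fun_neg, ?_⟩⟩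
      linarith [(hODE x hx).2]
  have hab := ha.trans hb
  have h0 : (0 : ℝ) ∈ Set.Icc a b := ⟨ha.le, hb.le⟩
  have hleft : Set.Ioo a 0 ⊆ Set.Icc a b := fun x hx => ⟨hx.1.le, (hx.2.trans hb).le⟩
  have hright : Set.Ioo 0 b ⊆ Set.Icc a b := fun x hx => ⟨(ha.trans hx.1).le, hx.2.le⟩
  have huc : ContinuousOn u (Set.Icc a b) := fun x hx => (hu x hx).continuousWithinAt
  have hu'nn : ∀ x ∈ Set.Icc a b, 0 ≤ u' x := fun x hx => by
    rw [← (hu x hx).derivWithin (uniqueDiffOn_Icc hab x hx)]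
    exact hmono.monotoneOn.derivWithin_nonneg
  have hVd : ∀ x ∈ Set.Ioo a b, HasDerivAt V (V' x) x := fun x hx =>
    (hV' x (Set.Ioo_subset_Icc_self hx)).hasDerivAt (Icc_mem_nhds hx.1 hx.2)
  have hV₀'c₁ : ContinuousOn V₀' (Set.Ioo a 0) :=
    hV₀sm₁.continuousOn_Ioo_of_hasDerivAt Set.Ioo_subset_Icc_self fun x hx =>
      (hV₀'₁ x (Set.Ioo_subset_Ico_self hx)).hasDerivAt (Icc_mem_nhds hx.1 hx.2)
  have hV₀'c₂ : ContinuousOn V₀' (Set.Ioo 0 b) :=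
    hV₀sm₂.continuousOn_Ioo_of_hasDerivAt Set.Ioo_subset_Icc_self fun x hx =>
      (hV₀'₂ x (Set.Ioo_subset_Ioc_self hx)).hasDerivAt (Icc_mem_nhds hx.1 hx.2)
  have hu''c : ∀ s ⊆ Set.Ioo a 0 ∪ Set.Ioo 0 b, s ⊆ Set.Icc a b → ContinuousOn V₀' s →
      ContinuousOn u'' s := fun s hs hsI hc => by
    have hu'c : ContinuousOn u' s := fun x hx =>
      (hode x (hs hx)).1.continuousAt.continuousWithinAt
    have husc := huc.mono hsI
    exact ContinuousOn.congr (f := fun x => -(lam₀ * u x) - V₀' x * u' x) (by fun_prop)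
      fun x hx => by linarith [(hode x (hs hx)).2]
  refine le_poincareConst_of_hardy (c := 0) hab hlam₀.le hVsm.continuousOn.rexp
    (fun x _ => Real.exp_pos _) fun K g hg hg0 => ?_
  refine hardy_two_sided_of_supersolution ha hb hlam₀.le hg hg0 hVsm.continuousOn hVd
    (hVsm.continuousOn_Ioo_of_hasDerivAt Set.Ioo_subset_Icc_self hVd)
    (fun x hx => (hu x (Set.Ioo_subset_Icc_self hx)).hasDerivAt (Icc_mem_nhds hx.1 hx.2))
    (fun x hx => (hode x hx).1) (hu''c _ Set.subset_union_left hleft hV₀'c₁)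
    (hu''c _ Set.subset_union_right hright hV₀'c₂)
    (fun x hx => hu0 ▸ hmono (hleft hx) h0 hx.2) (fun x hx => hu0 ▸ hmono h0 (hright hx) hx.1)
    (fun x hx => hu'nn x (Set.Ioo_subset_Icc_self hx)) (fun x hx => ?_) fun x hx => ?_
  · have := mul_le_mul_of_nonneg_right (hge x (Set.Ioo_subset_Ico_self hx)) (hu'nn x (hleft hx))
    linarith [(hode x (Or.inl hx)).2]
  · have := mul_le_mul_of_nonneg_right (hle x (Set.Ioo_subset_Ioc_self hx)) (hu'nn x (hright hx))
    linarith [(hode x (Or.inr hx)).2]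
end

section
/- Let K ∈ ℝ, N ∈ (1,∞), and let h be an MCP(K,N) density whose support has diameter exactly D ∈ (0,∞). Then λ[h] ≥ λ[h_{K,N,D}]. -/
open MeasureTheory Filter

open Set Topology
open scoped ENNReal

lemma locLipschitzOn_univ_iff {f : ℝ → ℝ} : LocLipschitzOn f univ ↔ LocallyLipschitz f := by
  constructor
  · intro hf x
    obtain ⟨ε, hε, C, hC⟩ := hf x (mem_univ x)
    exact ⟨C, Metric.ball x ε, Metric.ball_mem_nhds x hε, by simpa using hC⟩
  · intro hf x _
    obtain ⟨C, t, ht, hC⟩ := hf x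
    obtain ⟨ε, hε, hsub⟩ := Metric.mem_nhds_iff.1 ht
    exact ⟨ε, hε, C, by simpa using hC.mono hsub⟩

lemma LocallyLipschitz.ae_differentiableAt {f : ℝ → ℝ} (hf : LocallyLipschitz f) :
    ∀ᵐ x, DifferentiableAt ℝ f x := by
  rw [ae_iff]
  refine measure_null_of_locally_null _ fun x _ => ?_
  obtain ⟨C, t, ht, hC⟩ := hf x
  have h0 := (hC.mono interior_subset).ae_differentiableWithinAt_of_mem_real
  rw [ae_iff] at h0
  refine ⟨{y | ¬ DifferentiableAt ℝ f y} ∩ interior t,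
    inter_mem self_mem_nhdsWithin (mem_nhdsWithin_of_mem_nhds (interior_mem_nhds.2 ht)),
    measure_mono_null ?_ h0⟩
  rintro y ⟨hy, hyt⟩
  simp only [mem_ofPred_eq, Classical.not_imp]
  exact ⟨hyt, fun h => hy (h.differentiableAt (isOpen_interior.mem_nhds hyt))⟩

lemma slopeOn_univ_eq_abs_deriv {f : ℝ → ℝ} {x : ℝ} (hf : DifferentiableAt ℝ f x) :
    slopeOn f univ x = |deriv f x| := by
  have h := (hasDerivAt_iff_tendsto_slope.1 hf.hasDerivAt).abs
  rw [slopeOn, ← compl_eq_univ_sdiff]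
  refine Tendsto.limsup_eq (h.congr fun y => ?_)
  rw [slope_def_field, abs_div]

lemma LocallyLipschitz.slopeOn_univ_sq_ae {f : ℝ → ℝ} (hf : LocallyLipschitz f) :
    ∀ᵐ x, slopeOn f univ x ^ 2 = deriv f x ^ 2 := by
  filter_upwards [hf.ae_differentiableAt] with x hx
  rw [slopeOn_univ_eq_abs_deriv hx, sq_abs]

lemma poincareConst_univ_le {h f : ℝ → ℝ} (h0 : ∀ x, 0 ≤ h x) (hf : LocallyLipschitz f)
    (hmean : ∫ x, f x * h x = 0) (hpos : 0 < ∫ x, f x ^ 2 * h x) :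
    poincareConst h univ * ∫ x, f x ^ 2 * h x ≤ ∫ x, deriv f x ^ 2 * h x := by
  rw [← le_div_iff₀ hpos]
  refine csInf_le ⟨0, ?_⟩ ⟨f, locLipschitzOn_univ_iff.2 hf, by simpa using hmean,
    by simpa using hpos, ?_, ?_⟩
  · rintro r ⟨g, -, -, hg, -, rfl⟩
    exact div_nonneg (integral_nonneg fun x => mul_nonneg (sq_nonneg _) (h0 x)) hg.le
  · rw [integrableOn_univ]
    by_contra hni
    rw [integral_undef hni] at hpos
    exact hpos.false
  · simp only [Measure.restrict_univ]
    congr 1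
    refine integral_congr_ae ?_
    filter_upwards [hf.slopeOn_univ_sq_ae] with x hx
    rw [hx]

lemma poincareConst_univ_nonneg {h : ℝ → ℝ} (h0 : ∀ x, 0 ≤ h x) : 0 ≤ poincareConst h univ := by
  refine Real.sInf_nonneg ?_
  rintro r ⟨g, -, -, hg, -, rfl⟩
  exact div_nonneg (integral_nonneg fun x => mul_nonneg (sq_nonneg _) (h0 x)) hg.le

/-- If a mixed Dirichlet–Neumann inequality on `(0, c)` holds for the weight `G`, it holds for
every weight `k` such that `k / G` is nonincreasing. -/
lemma dirichletNeumann_of_antitoneOn {c : ℝ} {L : ℝ≥0∞} (hLt : L ≠ ⊤) {G k F : ℝ → ℝ}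
    (hGm : Measurable G) (hG : ∀ x ∈ Ioo 0 c, 0 < G x)
    (hL : ∀ f : ℝ → ℝ, LocallyLipschitz f → f 0 = 0 →
      L * ∫⁻ x in Ioo 0 c, ENNReal.ofReal (f x ^ 2 * G x) ≤
        ∫⁻ x in Ioo 0 c, ENNReal.ofReal (deriv f x ^ 2 * G x))
    (hk0 : ∀ x, 0 ≤ k x) (hk : AntitoneOn (fun x => k x / G x) (Ioo 0 c))
    (hF : LocallyLipschitz F) (hF0 : F 0 = 0) :
    L * ∫⁻ x in Ioo 0 c, ENNReal.ofReal (F x ^ 2 * k x) ≤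
      ∫⁻ x in Ioo 0 c, ENNReal.ofReal (deriv F x ^ 2 * k x) := by
  have truncated : ∀ t ∈ Ioc 0 c, L * ∫⁻ x in Ioo 0 t, ENNReal.ofReal (F x ^ 2 * G x) ≤
      ∫⁻ x in Ioo 0 t, ENNReal.ofReal (deriv F x ^ 2 * G x) := by
    intro t ht
    set f : ℝ → ℝ := fun x => F (min x t) with hf
    have hfL : LocallyLipschitz f :=
      hF.comp (LocallyLipschitz.id.min_const t)
    have key := hL f hfL (by simp [hf, ht.1.le, hF0])
    have hsub : Ioo 0 t ⊆ Ioo 0 c := Ioo_subset_Ioo_right ht.2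
    calc L * ∫⁻ x in Ioo 0 t, ENNReal.ofReal (F x ^ 2 * G x)
        = L * ∫⁻ x in Ioo 0 t, ENNReal.ofReal (f x ^ 2 * G x) := by
          congr 1
          refine setLIntegral_congr_fun measurableSet_Ioo fun x hx => ?_
          simp [hf, min_eq_left hx.2.le]
      _ ≤ L * ∫⁻ x in Ioo 0 c, ENNReal.ofReal (f x ^ 2 * G x) := by
          gcongr
      _ ≤ _ := key
      _ ≤ ∫⁻ x in Ioo 0 c, (Ioo 0 t).indicator
            (fun x => ENNReal.ofReal (deriv F x ^ 2 * G x)) x := by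
          refine lintegral_mono_ae ?_
          filter_upwards [ae_restrict_mem measurableSet_Ioo,
            ae_restrict_of_ae (Measure.ae_ne volume t)]
            with x hx hxt
          rcases lt_or_gt_of_ne hxt with hlt | hgt
          · rw [indicator_of_mem (show x ∈ Ioo 0 t from ⟨hx.1, hlt⟩)]
            have : f =ᶠ[𝓝 x] F := by
              filter_upwards [Iio_mem_nhds hlt] with y hy
              simp [hf, min_eq_left (mem_Iio.1 hy).le]
            rw [this.deriv_eq]
          · have : f =ᶠ[𝓝 x] fun _ => F t := by
              filter_upwards [Ioi_mem_nhds hgt] with y hy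
              simp [hf, min_eq_right (mem_Ioi.1 hy).le]
            rw [this.deriv_eq]
            simp
      _ = _ := by
          rw [lintegral_indicator measurableSet_Ioo, Measure.restrict_restrict measurableSet_Ioo,
            inter_eq_left.2 hsub]
  have hρm : AEMeasurable (fun x => k x / G x) (volume.restrict (Ioo 0 c)) :=
    aemeasurable_restrict_of_antitoneOn measurableSet_Ioo hk
  have layer : ∀ g : ℝ → ℝ, Measurable g →
      ∫⁻ x in Ioo 0 c, ENNReal.ofReal (g x ^ 2 * k x) = ∫⁻ u in Ioi (0 : ℝ),
        ∫⁻ x in {x | u < k x / G x} ∩ Ioo 0 c, ENNReal.ofReal (g x ^ 2 * G x) := by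
    intro g hg
    set w : ℝ → ℝ≥0∞ := fun x => ENNReal.ofReal (g x ^ 2 * G x) with hw
    have hwm : Measurable w := by fun_prop
    have hac := withDensity_absolutelyContinuous (volume.restrict (Ioo 0 c)) w
    have h1 := lintegral_eq_lintegral_meas_lt ((volume.restrict (Ioo 0 c)).withDensity w)
      (f := fun x => k x / G x)
      (hac.ae_le ((ae_restrict_mem measurableSet_Ioo).mono
        fun x hx => div_nonneg (hk0 x) (hG x hx).le)) (hρm.mono_ac hac)
    rw [lintegral_withDensity_eq_lintegral_mul₀ hwm.aemeasurable hρm.ennreal_ofReal] at h1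
    calc _ = _ := ?_
      _ = _ := h1
      _ = _ := ?_
    · refine setLIntegral_congr_fun measurableSet_Ioo fun x hx => ?_
      have hGx := hG x hx
      simp only [hw, Pi.mul_apply]
      rw [← ENNReal.ofReal_mul (by positivity)]
      congr 1
      field_simp
    · refine lintegral_congr fun u => ?_
      rw [withDensity_apply', Measure.restrict_restrict' measurableSet_Ioo]
  rw [layer F hF.continuous.measurable, layer (deriv F) (measurable_deriv F)]
  rw [← lintegral_const_mul' _ _ hLt]
  refine lintegral_mono fun u => ?_
  set B := {x | u < k x / G x} ∩ Ioo 0 c with hB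
  rcases B.eq_empty_or_nonempty with hBe | ⟨x₀, hx₀⟩
  · simp [hBe]
  have hbdd : BddAbove B := ⟨c, fun x hx => hx.2.2.le⟩
  have hpos : 0 < sSup B := hx₀.2.1.trans_le (le_csSup hbdd hx₀)
  have hle : sSup B ≤ c := csSup_le ⟨x₀, hx₀⟩ fun x hx => hx.2.2.le
  have hlow : Ioo 0 (sSup B) ⊆ B := by
    intro x hx
    obtain ⟨y, hy, hxy⟩ := exists_lt_of_lt_csSup ⟨x₀, hx₀⟩ hx.2
    have hxc : x ∈ Ioo 0 c := ⟨hx.1, hx.2.trans_le hle⟩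
    exact ⟨lt_of_lt_of_le hy.1 (hk hxc hy.2 hxy.le), hxc⟩
  have hup : B ⊆ Ioc 0 (sSup B) := fun x hx => ⟨hx.2.1, le_csSup hbdd hx⟩
  have hae : B =ᵐ[volume] Ioo 0 (sSup B) :=
    (hup.eventuallyLE.trans Ioo_ae_eq_Ioc.symm.le).antisymm hlow.eventuallyLE
  rw [setLIntegral_congr hae, setLIntegral_congr hae]
  exact truncated _ ⟨hpos, hle⟩

lemma ofReal_integral_le_lintegral_ofReal {α : Type*} [MeasurableSpace α] {μ : Measure α}
    {f : α → ℝ} (hf : 0 ≤ᵐ[μ] f) :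
    ENNReal.ofReal (∫ x, f x ∂μ) ≤ ∫⁻ x, ENNReal.ofReal (f x) ∂μ := by
  by_cases hfi : Integrable f μ
  · exact (ofReal_integral_eq_lintegral_ofReal hfi hf).le
  · simp [integral_undef hfi]

/-- For a weight symmetric about `c`, odd reflection bounds the mixed Dirichlet–Neumann constant
of a half from below by the Poincaré constant. -/
lemma poincareConst_mul_half_le {c : ℝ} {w G : ℝ → ℝ}
    (hG : Continuous G) (hG0 : ∀ x ∈ Icc 0 c, 0 ≤ G x)
    (hw : ∀ s, w (c + s) = (Iic c).indicator G |s|) {f : ℝ → ℝ} (hf : LocallyLipschitz f)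
    (hf0 : f 0 = 0) :
    ENNReal.ofReal (poincareConst w univ) * ∫⁻ x in Ioo 0 c, ENNReal.ofReal (f x ^ 2 * G x) ≤
      ∫⁻ x in Ioo 0 c, ENNReal.ofReal (deriv f x ^ 2 * G x) := by
  have hw0 : ∀ x, 0 ≤ w x := by
    intro x
    have := hw (x - c)
    rw [add_sub_cancel] at this
    rw [this]
    exact indicator_apply_nonneg fun h => hG0 _ ⟨abs_nonneg _, h⟩
  set g : ℝ → ℝ := fun s => f (max s 0) - f (max (-s) 0) with hg
  have hgL : LocallyLipschitz g :=
    (hf.comp (LocallyLipschitz.id.max_const 0)).sub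
      (hf.comp (LocallyLipschitz.id.neg.max_const 0))
  have hg_neg : ∀ s, g (-s) = -g s := fun s => by simp [hg]
  have hg_pos : ∀ s, 0 ≤ s → g s = f s := fun s hs => by simp [hg, hs, hf0]
  have hg_sq : ∀ s, g s ^ 2 = f |s| ^ 2 := by
    intro s
    rcases le_total 0 s with hs | hs
    · rw [hg_pos s hs, abs_of_nonneg hs]
    · rw [abs_of_nonpos hs, ← hg_pos (-s) (neg_nonneg.2 hs), hg_neg, neg_sq]
  have hg_deriv : ∀ s, s ≠ 0 → deriv g s ^ 2 = deriv f |s| ^ 2 := by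
    have hpos : ∀ s, 0 < s → deriv g s = deriv f s := fun s hs =>
      Filter.EventuallyEq.deriv_eq (by
        filter_upwards [Ioi_mem_nhds hs] with y hy using hg_pos y (mem_Ioi.1 hy).le)
    intro s hs
    rcases lt_or_gt_of_ne hs with hs | hs
    · have : deriv g s = deriv g (-s) := by
        have h1 : (fun x => g (-x)) = fun x => -g x := funext hg_neg
        have h2 := deriv_comp_neg g s
        rw [h1, deriv.fun_neg] at h2
        linarith
      rw [this, hpos (-s) (by linarith), abs_of_neg hs]
    · rw [hpos s hs, abs_of_pos hs]
  have hfold : ∀ φ : ℝ → ℝ, ∫ s, φ |s| * (Iic c).indicator G |s| =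
      2 * ∫ s in Ioo 0 c, φ s * G s := by
    intro φ
    rw [integral_comp_abs (f := fun s => φ s * (Iic c).indicator G s)]
    simp_rw [← indicator_mul_right (Iic c) φ]
    rw [setIntegral_indicator measurableSet_Iic, Ioi_inter_Iic, integral_Ioc_eq_integral_Ioo]
  set F : ℝ → ℝ := fun x => g (x - c) with hF
  have hFL : LocallyLipschitz F := hgL.comp (LocallyLipschitz.id.sub (LocallyLipschitz.const c))
  have hshift : ∀ ψ : ℝ → ℝ, ∫ x, ψ x = ∫ s, ψ (c + s) := fun ψ =>
    (integral_add_left_eq_self ψ c).symm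
  have hmean : ∫ x, F x * w x = 0 := by
    rw [hshift]
    simp only [hF, hw, add_sub_cancel_left]
    have := integral_neg_eq_self (fun s => g s * (Iic c).indicator G |s|) volume
    simp only [hg_neg, abs_neg, neg_mul, integral_neg] at this
    linarith
  have hsq : ∫ x, F x ^ 2 * w x = 2 * ∫ s in Ioo 0 c, f s ^ 2 * G s := by
    rw [hshift, ← hfold fun s => f s ^ 2]
    simp only [hF, hw, add_sub_cancel_left, hg_sq]
  have hder : ∫ x, deriv F x ^ 2 * w x = 2 * ∫ s in Ioo 0 c, deriv f s ^ 2 * G s := by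
    rw [hshift, ← hfold fun s => deriv f s ^ 2]
    refine integral_congr_ae ?_
    filter_upwards [Measure.ae_ne volume 0] with s hs
    simp only [hF, hw, deriv_comp_sub_const, add_sub_cancel_left, hg_deriv s hs]
  have hint : IntegrableOn (fun s => f s ^ 2 * G s) (Ioo 0 c) := by
    refine IntegrableOn.mono_set (t := Icc 0 c) ?_ Ioo_subset_Icc_self
    exact ((hf.continuous.pow 2).mul hG).continuousOn.integrableOn_Icc
  have hnn : ∀ φ : ℝ → ℝ, 0 ≤ᵐ[volume.restrict (Ioo 0 c)] fun s => φ s ^ 2 * G s := fun φ =>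
    (ae_restrict_mem measurableSet_Ioo).mono fun s hs =>
      mul_nonneg (sq_nonneg _) (hG0 s (Ioo_subset_Icc_self hs))
  have hP := poincareConst_univ_nonneg hw0
  have key : poincareConst w univ * ∫ s in Ioo 0 c, f s ^ 2 * G s ≤
      ∫ s in Ioo 0 c, deriv f s ^ 2 * G s := by
    rcases (integral_nonneg_of_ae (hnn f)).eq_or_lt with h0 | hpos
    · rw [← h0, mul_zero]
      exact integral_nonneg_of_ae (hnn _)
    · have := poincareConst_univ_le hw0 hFL hmean (by rw [hsq]; positivity)
      rw [hsq, hder] at this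
      linarith
  rw [← ofReal_integral_eq_lintegral_ofReal hint (hnn f), ← ENNReal.ofReal_mul hP]
  exact (ENNReal.ofReal_le_ofReal key).trans (ofReal_integral_le_lintegral_ofReal (hnn _))

lemma continuous_sKappa (κ : ℝ) : Continuous (sKappa κ) := by
  unfold sKappa
  split_ifs <;> fun_prop

lemma sKappa_pos {κ θ : ℝ} (h0 : 0 < θ) (hκ : 0 < κ → θ < Real.pi / Real.sqrt κ) :
    0 < sKappa κ θ := by
  unfold sKappa
  split_ifs with h1 h2
  · have hs := Real.sqrt_pos.2 h1
    refine div_pos (Real.sin_pos_of_pos_of_lt_pi (by positivity) ?_) hs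
    have := (lt_div_iff₀ hs).1 (hκ h1)
    linarith
  · have hs := Real.sqrt_pos.2 (neg_pos.2 h2)
    exact div_pos (Real.sinh_pos_iff.2 (by positivity)) hs
  · exact h0

lemma modelDensity_half_add {K N D : ℝ} (s : ℝ) :
    modelDensity K N D (D / 2 + s) = (Iic (D / 2)).indicator
      (fun s => sKappa (K / (N - 1)) (D / 2 + s) ^ (N - 1)) |s| := by
  unfold modelDensity
  rcases le_total s 0 with hs | hs
  · rw [abs_of_nonpos hs]
    by_cases h : -s ≤ D / 2
    · rw [if_pos ⟨by linarith, by linarith⟩, indicator_of_mem (mem_Iic.2 h)]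
      ring_nf
    · rw [if_neg (fun h' => h (by linarith [h'.1])), if_neg (fun h' => h (by linarith [h'.1, h'.2])),
        indicator_of_notMem (by simpa using h)]
  · rw [abs_of_nonneg hs]
    by_cases h : s ≤ D / 2
    · rw [indicator_of_mem (mem_Iic.2 h)]
      rcases hs.eq_or_lt with rfl | hs'
      · rw [if_pos ⟨by linarith, by linarith⟩]
        ring_nf
      · rw [if_neg (fun h' => by linarith [h'.2]), if_pos ⟨by linarith, by linarith⟩]
    · rw [if_neg (fun h' => h (by linarith [h'.1, h'.2])), if_neg (fun h' => h (by linarith [h'.2])),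
        indicator_of_notMem (by simpa using h)]

lemma isClosed_measSupport (h : ℝ → ℝ) : IsClosed (measSupport h) := by
  rw [← isOpen_compl_iff, Metric.isOpen_iff]
  intro x hx
  simp only [measSupport, mem_compl_iff, mem_ofPred_eq, not_forall, not_lt, nonpos_iff_eq_zero] at hx
  obtain ⟨ε, hε, h0⟩ := hx
  refine ⟨ε, hε, fun y hy hyS => ?_⟩
  have hpos := hyS (ε - dist y x) (sub_pos.2 hy)
  exact hpos.ne' (measure_mono_null (Metric.ball_subset_ball' (by linarith)) h0)

lemma withDensity_measSupport_compl (h : ℝ → ℝ) :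
    (volume.withDensity fun y => ENNReal.ofReal (h y)) (measSupport h)ᶜ = 0 := by
  refine measure_null_of_locally_null _ fun x hx => ?_
  simp only [measSupport, mem_compl_iff, mem_ofPred_eq, not_forall, not_lt, nonpos_iff_eq_zero] at hx
  obtain ⟨ε, hε, h0⟩ := hx
  exact ⟨Metric.ball x ε, mem_nhdsWithin_of_mem_nhds (Metric.ball_mem_nhds x hε), h0⟩

namespace IsMCPDensity

variable {K N : ℝ} {h : ℝ → ℝ}

lemma aemeasurable_ofReal (hM : IsMCPDensity K N h) :
    AEMeasurable (fun y => ENNReal.ofReal (h y)) volume :=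
  hM.2.1.aestronglyMeasurable.aemeasurable.ennreal_ofReal

lemma ae_eq_zero_of_notMem (hM : IsMCPDensity K N h) :
    ∀ᵐ x, x ∉ measSupport h → h x = 0 := by
  have h0 := withDensity_measSupport_compl h
  rw [withDensity_apply_eq_zero' hM.aemeasurable_ofReal] at h0
  rw [ae_iff]
  refine measure_mono_null (fun x hx => ?_) h0
  simp only [mem_ofPred_eq, Classical.not_imp] at hx
  refine ⟨?_, hx.1⟩
  simpa using lt_of_le_of_ne (hM.1 x) (Ne.symm hx.2)

lemma exists_pos (hM : IsMCPDensity K N h) (hne : (measSupport h).Nonempty) :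
    ∃ x ∈ measSupport h, 0 < h x := by
  by_contra! hcon
  obtain ⟨a, ha⟩ := hne
  refine (ha 1 one_pos).ne' ?_
  rw [withDensity_apply_eq_zero' hM.aemeasurable_ofReal]
  refine measure_mono_null (fun x hx => ?_) (ae_iff.1 hM.ae_eq_zero_of_notMem)
  have hpos : 0 < h x := by simpa using hx.1
  simp only [mem_ofPred_eq, Classical.not_imp]
  exact ⟨fun hxS => hpos.not_ge (hcon x hxS), hpos.ne'⟩

lemma mem_measSupport_of_pos (hM : IsMCPDensity K N h) {a b : ℝ}
    (hpos : ∀ x ∈ Ioo a b, 0 < h x) : Ioo a b ⊆ measSupport h := by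
  intro x hx ε hε
  refine pos_iff_ne_zero.2 fun h0 => ?_
  rw [withDensity_apply_eq_zero' hM.aemeasurable_ofReal] at h0
  have hopen : IsOpen (Metric.ball x ε ∩ Ioo a b) := Metric.isOpen_ball.inter isOpen_Ioo
  refine (hopen.measure_pos volume ⟨x, Metric.mem_ball_self hε, hx⟩).ne'
    (measure_mono_null (fun y hy => ?_) h0)
  exact ⟨by simpa using hpos y hy.2, hy.1⟩

lemma dist_lt (hM : IsMCPDensity K N h) (hN : 1 < N) {x₀ x₁ : ℝ} (h₀ : x₀ ∈ measSupport h)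
    (h₁ : x₁ ∈ measSupport h) (hne : x₀ ≠ x₁) (hκ : 0 < K / (N - 1)) :
    |x₁ - x₀| < Real.pi / Real.sqrt (K / (N - 1)) :=
  (hM.2.2 x₀ h₀ x₁ h₁).1 ((div_pos_iff_of_pos_right (by linarith)).1 hκ) hne

lemma div_le_div (hM : IsMCPDensity K N h) (hN : 1 < N) {x₀ x₁ y : ℝ} (h₀ : x₀ ∈ measSupport h)
    (h₁ : x₁ ∈ measSupport h) (hne : y ≠ x₁) (hy : y ∈ uIcc x₀ x₁) :
    h x₀ / sKappa (K / (N - 1)) |x₁ - x₀| ^ (N - 1) ≤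
      h y / sKappa (K / (N - 1)) |x₁ - y| ^ (N - 1) := by
  have h01 : x₀ ≠ x₁ := by
    rintro rfl
    exact hne (by simpa using hy)
  rw [← segment_eq_uIcc, segment_eq_image] at hy
  obtain ⟨t, ht, rfl⟩ := hy
  simp only [smul_eq_mul] at hne ⊢
  have hd : 0 < |x₁ - x₀| := abs_pos.2 (sub_ne_zero.2 h01.symm)
  have ht1 : 0 < 1 - t := by
    refine lt_of_le_of_ne (by linarith [ht.2]) fun h => hne ?_
    have : t = 1 := by linarith
    simp [this]
  have hy : |x₁ - ((1 - t) * x₀ + t * x₁)| = (1 - t) * |x₁ - x₀| := by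
    rw [← abs_of_pos ht1, ← abs_mul, abs_of_pos ht1]
    ring_nf
  have hκ := hM.dist_lt hN h₀ h₁ h01
  have hs₀ : 0 < sKappa (K / (N - 1)) |x₁ - x₀| := sKappa_pos hd hκ
  have hs₁ : 0 < sKappa (K / (N - 1)) ((1 - t) * |x₁ - x₀|) :=
    sKappa_pos (by positivity) fun h => lt_of_le_of_lt (by nlinarith [ht.1]) (hκ h)
  have key := (hM.2.2 x₀ h₀ x₁ h₁).2 t ht
  rw [Real.div_rpow hs₁.le hs₀.le, add_comm (t * x₁), div_mul_eq_mul_div,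
    div_le_iff₀ (by positivity)] at key
  rw [hy, div_le_div_iff₀ (by positivity) (by positivity)]
  linarith

lemma pos_of_mem_uIcc (hM : IsMCPDensity K N h) (hN : 1 < N) {x₀ x₁ y : ℝ}
    (h₀ : x₀ ∈ measSupport h) (h₁ : x₁ ∈ measSupport h) (hne : y ≠ x₁) (hy : y ∈ uIcc x₀ x₁)
    (hpos : 0 < h x₀) : 0 < h y := by
  have h01 : x₀ ≠ x₁ := by
    rintro rfl
    exact hne (by simpa using hy)
  have hd : 0 < |x₁ - x₀| := abs_pos.2 (sub_ne_zero.2 h01.symm)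
  have hs₀ : 0 < sKappa (K / (N - 1)) |x₁ - x₀| := sKappa_pos hd (hM.dist_lt hN h₀ h₁ h01)
  have key := (div_pos hpos (Real.rpow_pos_of_pos hs₀ (N - 1))).trans_le
    (hM.div_le_div hN h₀ h₁ hne hy)
  refine lt_of_le_of_ne (hM.1 y) fun h0 => ?_
  rw [← h0, zero_div] at key
  exact key.false

/-- The support of an `MCP(K, N)` density of finite positive diameter is an interval, on whose
interior the density is positive. -/
lemma exists_interval (hM : IsMCPDensity K N h) (hN : 1 < N) {D : ℝ} (hD : 0 < D)
    (hdiam : Metric.diam (measSupport h) = D) :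
    ∃ m, m - D / 2 ∈ measSupport h ∧ m + D / 2 ∈ measSupport h ∧
      (∀ᵐ x, x ∉ Icc (m - D / 2) (m + D / 2) → h x = 0) ∧
      (∀ x ∈ Ioo (m - D / 2) (m + D / 2), 0 < h x) := by
  have hbdd : Bornology.IsBounded (measSupport h) := by
    by_contra hb
    rw [Metric.diam_eq_zero_of_unbounded hb] at hdiam
    exact hD.ne hdiam
  have hne : (measSupport h).Nonempty := by
    rw [nonempty_iff_ne_empty]
    intro he
    rw [he, Metric.diam_empty] at hdiam
    exact hD.ne hdiam
  have hcpt := Metric.isCompact_of_isClosed_isBounded (isClosed_measSupport h) hbdd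
  rw [Real.diam_eq hbdd] at hdiam
  have ha := hcpt.sInf_mem hne
  have hb := hcpt.sSup_mem hne
  have ha' : (sInf (measSupport h) + sSup (measSupport h)) / 2 - D / 2 = sInf (measSupport h) := by
    linarith
  have hb' : (sInf (measSupport h) + sSup (measSupport h)) / 2 + D / 2 = sSup (measSupport h) := by
    linarith
  refine ⟨(sInf (measSupport h) + sSup (measSupport h)) / 2, ?_⟩
  rw [ha', hb']
  refine ⟨ha, hb, ?_, fun x hx => ?_⟩
  · filter_upwards [hM.ae_eq_zero_of_notMem] with x hx hxI
    exact hx fun hxS => hxI ⟨csInf_le hcpt.bddBelow hxS, le_csSup hcpt.bddAbove hxS⟩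
  · obtain ⟨x₀, hx₀, hpos⟩ := hM.exists_pos hne
    rcases le_total x₀ x with hle | hle
    · exact hM.pos_of_mem_uIcc hN hx₀ hb hx.2.ne (mem_uIcc.2 (Or.inl ⟨hle, hx.2.le⟩)) hpos
    · exact hM.pos_of_mem_uIcc hN hx₀ ha hx.1.ne' (mem_uIcc.2 (Or.inr ⟨hx.1.le, hle⟩)) hpos

end IsMCPDensity

/-- A locally integrable weight vanishing outside `[a, b]` can be multiplied by any function with
which its product is integrable on `[a, b]`. -/
lemma integrable_mul_of_ae_zero_outside {a b : ℝ} {h φ : ℝ → ℝ}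
    (hzero : ∀ᵐ x, x ∉ Icc a b → h x = 0) (hφ : IntegrableOn (fun x => φ x * h x) (Icc a b)) :
    Integrable fun x => φ x * h x := by
  rw [← integrable_indicator_iff measurableSet_Icc] at hφ
  refine hφ.congr ?_
  filter_upwards [hzero] with x hx
  by_cases hxI : x ∈ Icc a b
  · rw [indicator_of_mem hxI]
  · rw [indicator_of_notMem hxI, hx hxI, mul_zero]

lemma Continuous.integrable_mul_of_ae_zero_outside {a b : ℝ} {h φ : ℝ → ℝ} (hφ : Continuous φ)
    (hloc : LocallyIntegrable h) (hzero : ∀ᵐ x, x ∉ Icc a b → h x = 0) :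
    Integrable fun x => φ x * h x :=
  _root_.integrable_mul_of_ae_zero_outside hzero
    ((hloc.integrableOn_isCompact isCompact_Icc).continuousOn_mul hφ.continuousOn isCompact_Icc)

/-- A Poincaré-type inequality on each half of an interval, for functions vanishing at its
midpoint, gives one on the whole interval. -/
lemma poincare_of_halves {m c L : ℝ} (hc : 0 < c) (hL : 0 ≤ L) {h : ℝ → ℝ} (h0 : ∀ x, 0 ≤ h x)
    (hloc : LocallyIntegrable h) (hzero : ∀ᵐ x, x ∉ Icc (m - c) (m + c) → h x = 0)
    (hright : ∀ F : ℝ → ℝ, LocallyLipschitz F → F 0 = 0 →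
      ENNReal.ofReal L * ∫⁻ s in Ioo 0 c, ENNReal.ofReal (F s ^ 2 * h (m + s)) ≤
        ∫⁻ s in Ioo 0 c, ENNReal.ofReal (deriv F s ^ 2 * h (m + s)))
    (hleft : ∀ F : ℝ → ℝ, LocallyLipschitz F → F 0 = 0 →
      ENNReal.ofReal L * ∫⁻ s in Ioo 0 c, ENNReal.ofReal (F s ^ 2 * h (m - s)) ≤
        ∫⁻ s in Ioo 0 c, ENNReal.ofReal (deriv F s ^ 2 * h (m - s)))
    {f : ℝ → ℝ} (hf : LocallyLipschitz f) (hmean : ∫ x, f x * h x = 0) :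
    L * ∫ x, f x ^ 2 * h x ≤ ∫ x, deriv f x ^ 2 * h x := by
  have hI : IntegrableOn h (Icc (m - c) (m + c)) := hloc.integrableOn_isCompact isCompact_Icc
  have hcont : ∀ φ : ℝ → ℝ, Continuous φ → Integrable fun x => φ x * h x := fun φ hφ =>
    hφ.integrable_mul_of_ae_zero_outside hloc hzero
  have hder : Integrable fun x => deriv f x ^ 2 * h x := by
    obtain ⟨C, hC⟩ := hf.locallyLipschitzOn.exists_lipschitzOnWith_of_compact
      (isCompact_Icc (a := m - c - 1) (b := m + c + 1))
    refine integrable_mul_of_ae_zero_outside hzero (hI.bdd_mul (c := (C : ℝ) ^ 2)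
      ((measurable_deriv f).pow_const 2).aestronglyMeasurable
      ((ae_restrict_mem measurableSet_Icc).mono fun x hx => ?_))
    have := norm_deriv_le_of_lipschitzOn
      (Icc_mem_nhds (by linarith [hx.1] : m - c - 1 < x) (by linarith [hx.2] : x < m + c + 1)) hC
    rw [norm_pow]
    gcongr
  have hnn : ∀ φ : ℝ → ℝ, 0 ≤ᵐ[volume] fun x => φ x ^ 2 * h x := fun φ =>
    ae_of_all _ fun x => mul_nonneg (sq_nonneg _) (h0 x)
  have hsplit : ∀ φ : ℝ → ℝ, ∫⁻ x, ENNReal.ofReal (φ x ^ 2 * h x) =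
      (∫⁻ s in Ioo 0 c, ENNReal.ofReal (φ (m - s) ^ 2 * h (m - s))) +
        ∫⁻ s in Ioo 0 c, ENNReal.ofReal (φ (m + s) ^ 2 * h (m + s)) := by
    intro φ
    set w : ℝ → ℝ≥0∞ := fun x => ENNReal.ofReal (φ x ^ 2 * h x) with hw
    have e1 : ∫⁻ s in Ioo 0 c, w (m + s) = ∫⁻ x in Ioo m (m + c), w x := by
      have := (measurePreserving_add_left volume m).setLIntegral_comp_preimage_emb
        (measurableEmbedding_addLeft m) w (Ioo m (m + c))
      simpa [preimage_const_add_Ioo] using this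
    have e2 : ∫⁻ s in Ioo 0 c, w (m - s) = ∫⁻ x in Ioo (m - c) m, w x := by
      have := (volume.measurePreserving_sub_left m).setLIntegral_comp_preimage_emb
        (Homeomorph.subLeft m).measurableEmbedding w (Ioo (m - c) m)
      simpa [preimage_const_sub_Ioo] using this
    have e3 : ∫⁻ x, w x = ∫⁻ x in Ioc (m - c) (m + c), w x := by
      rw [← lintegral_indicator measurableSet_Ioc]
      refine lintegral_congr_ae ?_
      filter_upwards [hzero, Measure.ae_ne volume (m - c)] with x hx hxne
      by_cases hxI : x ∈ Ioc (m - c) (m + c)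
      · rw [indicator_of_mem hxI]
      · rw [indicator_of_notMem hxI, hw]
        simp only
        rw [hx fun h' => hxI ⟨lt_of_le_of_ne h'.1 hxne.symm, h'.2⟩]
        simp
    rw [e1, e2, e3, ← Ioc_union_Ioc_eq_Ioc (show m - c ≤ m by linarith)
      (show m ≤ m + c by linarith), lintegral_union measurableSet_Ioc
        (Ioc_disjoint_Ioc_of_le le_rfl), setLIntegral_congr Ioo_ae_eq_Ioc,
        setLIntegral_congr Ioo_ae_eq_Ioc]
  have hfst : L * ∫ x, (f x - f m) ^ 2 * h x ≤ ∫ x, deriv f x ^ 2 * h x := by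
    rw [← ENNReal.ofReal_le_ofReal_iff (integral_nonneg_of_ae (hnn _)), ENNReal.ofReal_mul hL,
      ofReal_integral_eq_lintegral_ofReal
        (hcont (fun x => (f x - f m) ^ 2) ((hf.continuous.sub continuous_const).pow 2))
        (hnn fun x => f x - f m),
      ofReal_integral_eq_lintegral_ofReal hder (hnn _), hsplit (fun x => f x - f m), hsplit,
      mul_add]
    have hr := hright (fun s => f (m + s) - f m)
      ((hf.comp ((LocallyLipschitz.const m).add LocallyLipschitz.id)).sub
        (LocallyLipschitz.const _)) (by simp)
    have hl := hleft (fun s => f (m - s) - f m)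
      ((hf.comp ((LocallyLipschitz.const m).sub LocallyLipschitz.id)).sub
        (LocallyLipschitz.const _)) (by simp)
    simp only [deriv_sub_const, deriv_comp_const_add, deriv_comp_const_sub, neg_sq] at hr hl
    exact add_le_add hl hr
  have hexpand : ∫ x, (f x - f m) ^ 2 * h x =
      (∫ x, f x ^ 2 * h x) + f m ^ 2 * ∫ x, h x := by
    have hh : Integrable h := by simpa using hcont (fun _ => 1) continuous_const
    have : ∀ x, (f x - f m) ^ 2 * h x =
        f x ^ 2 * h x - 2 * f m * (f x * h x) + f m ^ 2 * h x := fun x => by ring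
    simp_rw [this]
    have hf2 : Integrable fun x => f x ^ 2 * h x := hcont (fun x => f x ^ 2) (hf.continuous.pow 2)
    have hf1 : Integrable fun x => 2 * f m * (f x * h x) := (hcont f hf.continuous).const_mul _
    have hf21 : Integrable fun x => f x ^ 2 * h x - 2 * f m * (f x * h x) := hf2.sub hf1
    rw [integral_add hf21 (hh.const_mul _), integral_sub hf2 hf1,
      integral_const_mul, integral_const_mul, hmean]
    ring
  have hh0 : 0 ≤ f m ^ 2 * ∫ x, h x := mul_nonneg (sq_nonneg _) (integral_nonneg h0)
  refine le_trans (mul_le_mul_of_nonneg_left ?_ hL) hfst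
  linarith

/-- Admissible functions for `poincareConst h univ` exist when `h` is positive on a bounded interval
and vanishes outside it. -/
lemma exists_admissible {a b : ℝ} (hab : a < b) {h : ℝ → ℝ} (h0 : ∀ x, 0 ≤ h x)
    (hloc : LocallyIntegrable h) (hzero : ∀ᵐ x, x ∉ Icc a b → h x = 0)
    (hpos : ∀ x ∈ Ioo a b, 0 < h x) :
    ∃ f : ℝ → ℝ, LocallyLipschitz f ∧ ∫ x, f x * h x = 0 ∧ 0 < ∫ x, f x ^ 2 * h x ∧
      Integrable fun x => f x ^ 2 * h x := by
  have hcont : ∀ φ : ℝ → ℝ, Continuous φ → Integrable fun x => φ x * h x := fun φ hφ =>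
    hφ.integrable_mul_of_ae_zero_outside hloc hzero
  have hh : Integrable h := by simpa using hcont (fun _ => 1) continuous_const
  have hvol : ∀ p : ℝ, 0 < volume (Ioo a b \ {p}) := fun p => by
    rw [measure_sdiff_null (measure_singleton p), Real.volume_Ioo]
    simpa using hab
  have hm : 0 < ∫ x, h x := by
    rw [integral_pos_iff_support_of_nonneg h0 hh]
    exact (hvol 0).trans_le (measure_mono fun x hx => (hpos x hx.1).ne')
  set p := (∫ x, x * h x) / ∫ x, h x with hp
  have hfi : Integrable fun x => (x - p) ^ 2 * h x := hcont (fun x => (x - p) ^ 2) (by fun_prop)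
  refine ⟨fun x => x - p, LocallyLipschitz.id.sub (LocallyLipschitz.const p), ?_, ?_, hfi⟩
  · simp_rw [sub_mul]
    rw [integral_sub (hcont (fun x => x) continuous_id) (hh.const_mul _), integral_const_mul, hp,
      div_mul_cancel₀ _ hm.ne']
    simp
  · rw [integral_pos_iff_support_of_nonneg (fun x => mul_nonneg (sq_nonneg _) (h0 x)) hfi]
    refine (hvol p).trans_le (measure_mono fun x hx => ?_)
    exact (mul_pos (pow_two_pos_of_ne_zero (sub_ne_zero.2 hx.2)) (hpos x hx.1)).ne'

/-- Sharp spectral-gap comparison for `MCP(K,N)` densities of diameter exactly `D`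
(Proposition 4.9). -/
theorem stmt_8 (K N D : ℝ) (hN : 1 < N) (hD : 0 < D)
    (h : ℝ → ℝ) (hMCP : IsMCPDensity K N h)
    (hdiam : Metric.diam (measSupport h) = D) :
    poincareConst (modelDensity K N D) Set.univ ≤ poincareConst h Set.univ := by
  obtain ⟨m, ha, hb, hzero, hpos⟩ := hMCP.exists_interval hN hD hdiam
  have hS := hMCP.mem_measSupport_of_pos hpos
  set G : ℝ → ℝ := fun s => sKappa (K / (N - 1)) (D / 2 + s) ^ (N - 1)
  have hG : Continuous G := ((continuous_sKappa _).comp (continuous_const.add continuous_id)).rpow_const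
    fun _ => Or.inr (by linarith)
  have hGpos : ∀ s ∈ Icc 0 (D / 2), 0 < G s := by
    intro s hs
    refine Real.rpow_pos_of_pos (sKappa_pos (by linarith [hs.1]) fun hκ => ?_) _
    have := hMCP.dist_lt hN ha hb (by linarith) hκ
    rw [abs_of_pos (by linarith)] at this
    linarith [hs.2]
  have half : ∀ k : ℝ → ℝ, (∀ x, 0 ≤ k x) → AntitoneOn (fun s => k s / G s) (Ioo 0 (D / 2)) →
      ∀ F : ℝ → ℝ, LocallyLipschitz F → F 0 = 0 →
      ENNReal.ofReal (poincareConst (modelDensity K N D) univ) *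
          ∫⁻ s in Ioo 0 (D / 2), ENNReal.ofReal (F s ^ 2 * k s) ≤
        ∫⁻ s in Ioo 0 (D / 2), ENNReal.ofReal (deriv F s ^ 2 * k s) := fun k hk0 hk F hF hF0 =>
    dirichletNeumann_of_antitoneOn ENNReal.ofReal_ne_top hG.measurable
      (fun x hx => hGpos x (Ioo_subset_Icc_self hx))
      (fun f hf hf0 => poincareConst_mul_half_le hG (fun x hx => (hGpos x hx).le)
        modelDensity_half_add hf hf0) hk0 hk hF hF0
  have hmodel0 : ∀ x, 0 ≤ modelDensity K N D x := fun x => by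
    have := modelDensity_half_add (K := K) (N := N) (D := D) (x - D / 2)
    rw [add_sub_cancel] at this
    rw [this]
    exact indicator_apply_nonneg fun h => (hGpos _ ⟨abs_nonneg _, h⟩).le
  have hright : AntitoneOn (fun s => h (m + s) / G s) (Ioo 0 (D / 2)) := by
    intro r hr s hs hrs
    have := hMCP.div_le_div (y := m + r) hN (hS ⟨by linarith [hs.1], by linarith [hs.2]⟩) ha
      (by linarith [hr.1])
      (mem_uIcc.2 (Or.inr ⟨by linarith [hr.1], by linarith⟩) : m + r ∈ uIcc (m + s) (m - D / 2))
    rwa [abs_of_nonpos (by linarith [hs.1]), abs_of_nonpos (by linarith [hr.1]),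
      show -(m - D / 2 - (m + s)) = D / 2 + s by ring,
      show -(m - D / 2 - (m + r)) = D / 2 + r by ring] at this
  have hleft : AntitoneOn (fun s => h (m - s) / G s) (Ioo 0 (D / 2)) := by
    intro r hr s hs hrs
    have := hMCP.div_le_div (y := m - r) hN (hS ⟨by linarith [hs.2], by linarith [hs.1]⟩) hb
      (by linarith [hr.1])
      (mem_uIcc.2 (Or.inl ⟨by linarith, by linarith [hr.1]⟩) : m - r ∈ uIcc (m - s) (m + D / 2))
    rwa [abs_of_nonneg (by linarith [hs.1]), abs_of_nonneg (by linarith [hr.1]),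
      show m + D / 2 - (m - s) = D / 2 + s by ring,
      show m + D / 2 - (m - r) = D / 2 + r by ring] at this
  refine le_csInf ?_ ?_
  · obtain ⟨f, hf, hmean, hsq, hint⟩ :=
      exists_admissible (by linarith) hMCP.1 hMCP.2.1 hzero hpos
    exact ⟨_, f, locLipschitzOn_univ_iff.2 hf, by simpa using hmean, by simpa using hsq,
      hint.integrableOn, rfl⟩
  · rintro r ⟨f, hf, hmean, hsq, -, rfl⟩
    rw [locLipschitzOn_univ_iff] at hf
    simp only [Measure.restrict_univ] at hmean hsq ⊢
    have hslope : ∫ x, slopeOn f univ x ^ 2 * h x = ∫ x, deriv f x ^ 2 * h x :=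
      integral_congr_ae (hf.slopeOn_univ_sq_ae.mono fun x hx => by simp only [hx])
    rw [le_div_iff₀ hsq, hslope]
    exact poincare_of_halves (half_pos hD) (poincareConst_univ_nonneg hmodel0) hMCP.1 hMCP.2.1
      hzero (half _ (fun _ => hMCP.1 _) hright) (half _ (fun _ => hMCP.1 _) hleft) hf hmean
end
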